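/- Suppose 0 ≤ α ≤ 1, let k ∈ ℕ, let t be a real number, and for x ∈ ℕ let V_x = {w ∈ V : degc(w) ≥ x}. Suppose |V_x| ≥ k, suppose there exists a set S ⊆ V with |S| = k and val(S) ≥ t, and let v ∈ V be a vertex with α·degc(v) < α·x − |(1−3α)·k|. Then there exists a set S' ⊆ V with |S'| = k, val(S') ≥ t and v ∉ S'. -/

import Mathlib

open Finset

variable {V : Type*} [Fintype V] [DecidableEq V]

/-- Number of edges of `G` with both endpoints in `S`. -/
def mIn (G : SimpleGraph V) [DecidableRel G.Adj] (S : Finset V) : ℕ :=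
  (G.edgeFinset.filter (fun e => ∀ v ∈ e, v ∈ S)).card

/-- Number of edges of `G` with exactly one endpoint in `S`. -/
def mCut (G : SimpleGraph V) [DecidableRel G.Adj] (S : Finset V) : ℕ :=
  (G.edgeFinset.filter (fun e => (∃ v ∈ e, v ∈ S) ∧ ∃ v ∈ e, v ∉ S)).card

/-- `val(S) = α·(m(S, V∖S) + counter(S)) + (1−α)·m(S)`. -/
noncomputable def val (G : SimpleGraph V) [DecidableRel G.Adj] (counter : V → ℕ) (α : ℝ)
    (S : Finset V) : ℝ :=
  α * ((mCut G S : ℝ) + ∑ v ∈ S, (counter v : ℝ)) + (1 - α) * (mIn G S : ℝ)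

/-- `degc(v) = deg(v) + counter(v)`. -/
def degc (G : SimpleGraph V) [DecidableRel G.Adj] (counter : V → ℕ) (v : V) : ℕ :=
  G.degree v + counter v

/-- `contribution(v, T) = α·degc(v) + (1−3α)·|N(v) ∩ T|`. -/
noncomputable def contribution (G : SimpleGraph V) [DecidableRel G.Adj] (counter : V → ℕ)
    (α : ℝ) (v : V) (T : Finset V) : ℝ :=
  α * (degc G counter v : ℝ) + (1 - 3 * α) * ((G.neighborFinset v ∩ T).card : ℝ)

/-!
Summing degrees over `S` counts every inner edge twice and every cut edge once, so
`val S = α · ∑ v ∈ S, degc v + (1 - 3α) · m(S)`. Hence adding a vertex `v ∉ T` to `T` raises the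
value by `contribution v T`, which differs from `α · degc v` by `(1 - 3α) · |N(v) ∩ T|`. If `v ∈ S`,
then `S \ {v}` has fewer than `k` elements and therefore misses some `w` with `degc w ≥ x`; the gap
between `α · degc v` and `α · x` absorbs the neighbour terms, and swapping `v` for `w` does not
lower the value.
-/

section

variable (G : SimpleGraph V) [DecidableRel G.Adj] (counter : V → ℕ) (α : ℝ)

theorem sum_degree_eq_mCut_add_two_mul_mIn (S : Finset V) :
    ∑ v ∈ S, G.degree v = mCut G S + 2 * mIn G S := by
  have double_count : ∑ v ∈ S, G.degree v = ∑ e ∈ G.edgeFinset, #{v ∈ S | v ∈ e} := by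
    simp only [← G.card_incidenceFinset_eq_degree, G.incidenceFinset_eq_filter]
    exact sum_card_bipartiteAbove_eq_sum_card_bipartiteBelow (· ∈ ·)
  rw [double_count, mCut, mIn, card_filter, card_filter, mul_sum, ← sum_add_distrib]
  refine sum_congr rfl fun e he ↦ ?_
  induction e with
  | _ a b =>
    have hab : a ≠ b := G.ne_of_adj (SimpleGraph.mem_edgeFinset.1 he)
    have endpoints : {v ∈ S | v ∈ s(a, b)} = {v ∈ ({a, b} : Finset V) | v ∈ S} := by
      ext v
      simp [and_comm]
    rw [endpoints, card_filter, sum_pair hab]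
    by_cases ha : a ∈ S <;> by_cases hb : b ∈ S <;> simp [ha, hb]

variable {T : Finset V} {u : V}

theorem mIn_insert (hu : u ∉ T) :
    mIn G (insert u T) = mIn G T + #(G.neighborFinset u ∩ T) := by
  have edges_insert : {e ∈ G.edgeFinset | ∀ v ∈ e, v ∈ insert u T} =
      {e ∈ G.edgeFinset | ∀ v ∈ e, v ∈ T} ∪ (G.neighborFinset u ∩ T).image (s(u, ·)) := by
    ext e
    induction e with
    | _ a b =>
      have adj_comm := G.adj_comm a b
      have not_adj_self := G.irrefl (v := u)
      simp only [mem_insert, mem_filter, SimpleGraph.mem_edgeFinset, SimpleGraph.mem_edgeSet,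
        Sym2.mem_iff, forall_eq_or_imp, forall_eq, mem_union, mem_image, mem_inter,
        SimpleGraph.mem_neighborFinset, Sym2.eq_iff]
      grind
  have edges_disjoint : Disjoint {e ∈ G.edgeFinset | ∀ v ∈ e, v ∈ T}
      ((G.neighborFinset u ∩ T).image (s(u, ·))) := by
    refine disjoint_left.2 fun e he he' ↦ ?_
    obtain ⟨w, -, rfl⟩ := mem_image.1 he'
    exact hu ((mem_filter.1 he).2 u (Sym2.mem_mk_left u w))
  rw [mIn, edges_insert, card_union_of_disjoint edges_disjoint,
    card_image_of_injective _ fun _ _ ↦ Sym2.congr_right.1, mIn]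

theorem val_eq_sum_degc_add_mIn (S : Finset V) :
    val G counter α S = α * ∑ v ∈ S, (degc G counter v : ℝ) + (1 - 3 * α) * mIn G S := by
  have handshake : ∑ v ∈ S, (G.degree v : ℝ) = mCut G S + 2 * mIn G S :=
    mod_cast sum_degree_eq_mCut_add_two_mul_mIn G S
  simp only [_root_.val, degc, Nat.cast_add, sum_add_distrib, handshake]
  ring

theorem val_insert (hu : u ∉ T) :
    val G counter α (insert u T) = val G counter α T + contribution G counter α u T := by
  rw [val_eq_sum_degc_add_mIn, val_eq_sum_degc_add_mIn, sum_insert hu, mIn_insert G hu,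
    contribution, Nat.cast_add]
  ring

variable {G counter α}

theorem contribution_le_contribution {v w : V}
    (h : α * degc G counter v + |(1 - 3 * α) * #T| ≤ α * degc G counter w) :
    contribution G counter α v T ≤ contribution G counter α w T := by
  have card_inter_le (u : V) : (#(G.neighborFinset u ∩ T) : ℝ) ≤ #T :=
    mod_cast card_le_card inter_subset_right
  have card_diff_le : |(#(G.neighborFinset v ∩ T) : ℝ) - #(G.neighborFinset w ∩ T)| ≤ #T :=
    abs_sub_le_of_nonneg_of_le (Nat.cast_nonneg _) (card_inter_le v) (Nat.cast_nonneg _)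
      (card_inter_le w)
  have weighted_diff_le : (1 - 3 * α) * ((#(G.neighborFinset v ∩ T) : ℝ) -
      #(G.neighborFinset w ∩ T)) ≤ |(1 - 3 * α) * #T| := by
    refine (le_abs_self _).trans ?_
    rw [abs_mul, abs_mul, Nat.abs_cast]
    gcongr
  rw [contribution, contribution]
  linarith

end

theorem exclude_low_degc_general (G : SimpleGraph V) [DecidableRel G.Adj]
    (counter : V → ℕ) (α : ℝ) (hα0 : 0 ≤ α) (k x : ℕ) (t : ℝ)
    (hVx : k ≤ #{w | x ≤ degc G counter w})
    (S : Finset V) (hScard : #S = k) (hSval : t ≤ val G counter α S) (v : V)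
    (hv : α * degc G counter v < α * x - |(1 - 3 * α) * k|) :
    ∃ S' : Finset V, #S' = k ∧ t ≤ val G counter α S' ∧ v ∉ S' := by
  by_cases hvS : v ∈ S
  swap
  · exact ⟨S, hScard, hSval, hvS⟩
  have hcard : #(S.erase v) < k := hScard ▸ card_erase_lt_of_mem hvS
  obtain ⟨w, hw, hwT⟩ := exists_mem_notMem_of_card_lt_card (hcard.trans_le hVx)
  have hxw : α * x ≤ α * degc G counter w := by
    gcongr
    exact (mem_filter.1 hw).2
  have hvw : v ≠ w := by
    rintro rfl
    linarith [abs_nonneg ((1 - 3 * α) * (k : ℝ))]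
  have hcontr : contribution G counter α v (S.erase v) ≤
      contribution G counter α w (S.erase v) := by
    have habs : |(1 - 3 * α) * #(S.erase v)| ≤ |(1 - 3 * α) * k| := by
      rw [abs_mul, abs_mul, Nat.abs_cast, Nat.abs_cast]
      gcongr
    exact contribution_le_contribution (by linarith)
  refine ⟨insert w (S.erase v), ?_, ?_, by simp [hvw]⟩
  · rw [card_insert_of_notMem hwT, card_erase_add_one hvS, hScard]
  · rw [← insert_erase hvS, val_insert G counter α (notMem_erase v S)] at hSval
    rw [val_insert G counter α hwT]
    linarith

/-- If `0 ≤ α ≤ 1`, at least `k` vertices have `degc ≥ x`, some `k`-set has value at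
least `t`, and `α·degc(v) < α·x − |(1−3α)k|`, then some `k`-set of value at least `t`
avoids `v`. -/
theorem exclude_low_degc (G : SimpleGraph V) [DecidableRel G.Adj]
    (counter : V → ℕ) (α : ℝ) (hα0 : 0 ≤ α) (hα1 : α ≤ 1) (k x : ℕ) (t : ℝ)
    (hVx : k ≤ (Finset.univ.filter (fun w => x ≤ degc G counter w)).card)
    (S : Finset V) (hScard : S.card = k) (hSval : val G counter α S ≥ t)
    (v : V)
    (hv : α * (degc G counter v : ℝ) < α * (x : ℝ) - |(1 - 3 * α) * (k : ℝ)|) :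
    ∃ S' : Finset V, S'.card = k ∧ val G counter α S' ≥ t ∧ v ∉ S' :=
  exclude_low_degc_general G counter α hα0 k x t hVx S hScard hSval v hv
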